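/- arXiv:1303.3754 — 7 statements merged into one kernel-verified Lean document; each statement's English description precedes it below -/
import Mathlib

section
/- For every t ≥ 1 and every u ∈ ℝ^d, P_t(u) = uᵀ D_t u − 2 uᵀ e_t + f_t, where each matrix D_t is symmetric positive definite. -/
open Matrix Finset

/-- `Q t u = b ‖u₁‖² + c ∑_{s=1}^{t-1} ‖u_{s+1} − u_s‖² + ∑_{s=1}^{t} (y_s − u_sᵀ x_s)²`. -/
noncomputable def Qfun (d : ℕ) (b c : ℝ) (x : ℕ → Fin d → ℝ) (y : ℕ → ℝ)
    (t : ℕ) (u : ℕ → Fin d → ℝ) : ℝ :=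
  b * (u 1 ⬝ᵥ u 1)
    + c * ∑ s ∈ Finset.range (t - 1), (u (s + 2) - u (s + 1)) ⬝ᵥ (u (s + 2) - u (s + 1))
    + ∑ s ∈ Finset.range t, (y (s + 1) - u (s + 1) ⬝ᵥ x (s + 1)) ^ 2

/-- `P t u = inf over u₁,…,u_{t-1} of Q t (u₁,…,u_{t-1},u)`. -/
noncomputable def Pfun (d : ℕ) (b c : ℝ) (x : ℕ → Fin d → ℝ) (y : ℕ → ℝ)
    (t : ℕ) (u : Fin d → ℝ) : ℝ :=
  ⨅ v : ℕ → Fin d → ℝ, Qfun d b c x y t (Function.update v t u)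

/-- `D₁ = b I + x₁ x₁ᵀ`, `D_t = (D_{t-1}⁻¹ + c⁻¹ I)⁻¹ + x_t x_tᵀ` for `t ≥ 2`
(the value at `0` is irrelevant). -/
noncomputable def Dmat (d : ℕ) (b c : ℝ) (x : ℕ → Fin d → ℝ) :
    ℕ → Matrix (Fin d) (Fin d) ℝ
  | 0 => 1
  | 1 => b • (1 : Matrix (Fin d) (Fin d) ℝ) + vecMulVec (x 1) (x 1)
  | (t + 2) => ((Dmat d b c x (t + 1))⁻¹ + c⁻¹ • 1)⁻¹ + vecMulVec (x (t + 2)) (x (t + 2))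

/-- `e₁ = y₁ x₁`, `e_t = (I + c⁻¹ D_{t-1})⁻¹ e_{t-1} + y_t x_t` for `t ≥ 2`. -/
noncomputable def evec (d : ℕ) (b c : ℝ) (x : ℕ → Fin d → ℝ) (y : ℕ → ℝ) :
    ℕ → Fin d → ℝ
  | 0 => 0
  | 1 => y 1 • x 1
  | (t + 2) => (1 + c⁻¹ • Dmat d b c x (t + 1))⁻¹ *ᵥ evec d b c x y (t + 1)
      + y (t + 2) • x (t + 2)

/-- `f₁ = y₁²`, `f_t = f_{t-1} − e_{t-1}ᵀ (c I + D_{t-1})⁻¹ e_{t-1} + y_t²` for `t ≥ 2`. -/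
noncomputable def fsc (d : ℕ) (b c : ℝ) (x : ℕ → Fin d → ℝ) (y : ℕ → ℝ) : ℕ → ℝ
  | 0 => 0
  | 1 => (y 1) ^ 2
  | (t + 2) => fsc d b c x y (t + 1)
      - evec d b c x y (t + 1) ⬝ᵥ ((c • (1 : Matrix (Fin d) (Fin d) ℝ)
          + Dmat d b c x (t + 1))⁻¹ *ᵥ evec d b c x y (t + 1))
      + (y (t + 2)) ^ 2

lemma laser_symm {d : ℕ} {A : Matrix (Fin d) (Fin d) ℝ} (hA : A.PosDef) (u v : Fin d → ℝ) :
    u ⬝ᵥ (A *ᵥ v) = v ⬝ᵥ (A *ᵥ u) := by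
  have h : Aᵀ = A := by
    have := hA.isHermitian
    rwa [Matrix.IsHermitian, Matrix.conjTranspose_eq_transpose_of_trivial] at this
  rw [Matrix.dotProduct_mulVec, ← Matrix.mulVec_transpose, h, dotProduct_comm]

lemma laser_A {d : ℕ} {c : ℝ} (hc : 0 < c) {D : Matrix (Fin d) (Fin d) ℝ} (hD : D.PosDef) :
    (c • (1 : Matrix (Fin d) (Fin d) ℝ) + D).PosDef :=
  (Matrix.PosDef.one.smul hc).add hD

lemma laser_E {d : ℕ} {c : ℝ} (hc : 0 < c) {D : Matrix (Fin d) (Fin d) ℝ} (hD : D.PosDef) :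
    (1 + c⁻¹ • D)⁻¹ = c • (c • (1 : Matrix (Fin d) (Fin d) ℝ) + D)⁻¹ := by
  have hu := (Matrix.isUnit_iff_isUnit_det _).1 (laser_A hc hD).isUnit
  apply Matrix.inv_eq_right_inv
  have : (1 + c⁻¹ • D) = c⁻¹ • (c • (1 : Matrix (Fin d) (Fin d) ℝ) + D) := by
    rw [smul_add, smul_smul, inv_mul_cancel₀ hc.ne', one_smul]
  rw [this, Matrix.smul_mul, Matrix.mul_smul, Matrix.mul_nonsing_inv _ hu, smul_smul,
    inv_mul_cancel₀ hc.ne', one_smul]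

lemma laser_K {d : ℕ} {c : ℝ} (hc : 0 < c) {D : Matrix (Fin d) (Fin d) ℝ} (hD : D.PosDef) :
    (D⁻¹ + c⁻¹ • 1)⁻¹ = c • (1 : Matrix (Fin d) (Fin d) ℝ)
      - (c * c) • (c • (1 : Matrix (Fin d) (Fin d) ℝ) + D)⁻¹ := by
  have hu := (Matrix.isUnit_iff_isUnit_det _).1 (laser_A hc hD).isUnit
  have hDu := (Matrix.isUnit_iff_isUnit_det _).1 hD.isUnit
  set A := c • (1 : Matrix (Fin d) (Fin d) ℝ) + D with hAdef
  have h1 : D⁻¹ + c⁻¹ • 1 = c⁻¹ • (A * D⁻¹) := by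
    rw [hAdef, add_mul, Matrix.mul_nonsing_inv _ hDu, Matrix.smul_mul, one_mul, smul_add,
      smul_smul, inv_mul_cancel₀ hc.ne', one_smul]
  have h2 : c • (1 : Matrix (Fin d) (Fin d) ℝ) - (c * c) • A⁻¹ = c • (D * A⁻¹) := by
    have : D = A - c • 1 := by rw [hAdef]; abel
    rw [this, sub_mul, Matrix.mul_nonsing_inv _ hu, Matrix.smul_mul, one_mul, smul_sub, smul_smul]
  rw [h1, h2]
  apply Matrix.inv_eq_right_inv
  rw [Matrix.smul_mul, Matrix.mul_smul, smul_smul, inv_mul_cancel₀ hc.ne', one_smul,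
    Matrix.mul_assoc, ← Matrix.mul_assoc D⁻¹, Matrix.nonsing_inv_mul _ hDu, one_mul,
    Matrix.mul_nonsing_inv _ hu]

lemma laser_square {d : ℕ} {c : ℝ} (hc : 0 < c) {D : Matrix (Fin d) (Fin d) ℝ} (hD : D.PosDef)
    (e u w z : Fin d → ℝ) (f : ℝ)
    (hz : z = (c • (1 : Matrix (Fin d) (Fin d) ℝ) + D)⁻¹ *ᵥ (e + c • u)) :
    w ⬝ᵥ (D *ᵥ w) - 2 * (w ⬝ᵥ e) + f + c * ((u - w) ⬝ᵥ (u - w)) =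
      (w - z) ⬝ᵥ ((c • (1 : Matrix (Fin d) (Fin d) ℝ) + D) *ᵥ (w - z))
      + (u ⬝ᵥ ((D⁻¹ + c⁻¹ • 1)⁻¹ *ᵥ u) - 2 * (u ⬝ᵥ ((1 + c⁻¹ • D)⁻¹ *ᵥ e))
        + (f - e ⬝ᵥ ((c • (1 : Matrix (Fin d) (Fin d) ℝ) + D)⁻¹ *ᵥ e))) := by
  have hA := laser_A hc hD
  have hu := (Matrix.isUnit_iff_isUnit_det _).1 hA.isUnit
  rw [laser_E hc hD, laser_K hc hD]
  have hAw : w ⬝ᵥ (D *ᵥ w) = w ⬝ᵥ ((c • (1 : Matrix (Fin d) (Fin d) ℝ) + D) *ᵥ w)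
      - c * (w ⬝ᵥ w) := by
    simp [Matrix.add_mulVec, Matrix.smul_mulVec, dotProduct_add, dotProduct_smul]
  rw [hAw]
  generalize c • (1 : Matrix (Fin d) (Fin d) ℝ) + D = A at *
  have hAz : A *ᵥ z = e + c • u := by
    rw [hz, Matrix.mulVec_mulVec, Matrix.mul_nonsing_inv _ hu, Matrix.one_mulVec]
  have hzw : z ⬝ᵥ (A *ᵥ w) = w ⬝ᵥ e + c * (w ⬝ᵥ u) := by
    rw [laser_symm hA, hAz, dotProduct_add, dotProduct_smul, smul_eq_mul]
  have hM := laser_symm hA.inv e u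
  have hz1 : z ⬝ᵥ e = e ⬝ᵥ (A⁻¹ *ᵥ e) + c * (u ⬝ᵥ (A⁻¹ *ᵥ e)) := by
    rw [dotProduct_comm, hz, Matrix.mulVec_add, Matrix.mulVec_smul, dotProduct_add,
      dotProduct_smul, smul_eq_mul, hM]
  have hz2 : z ⬝ᵥ u = u ⬝ᵥ (A⁻¹ *ᵥ e) + c * (u ⬝ᵥ (A⁻¹ *ᵥ u)) := by
    rw [dotProduct_comm, hz, Matrix.mulVec_add, Matrix.mulVec_smul, dotProduct_add,
      dotProduct_smul, smul_eq_mul]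
  have hwu := dotProduct_comm w u
  simp only [Matrix.mulVec_sub, hAz, sub_dotProduct, dotProduct_sub, dotProduct_add,
    dotProduct_smul, smul_eq_mul, Matrix.sub_mulVec, Matrix.smul_mulVec, Matrix.one_mulVec,
    hzw, hz1, hz2, hwu]
  ring

lemma laser_Q_succ (d : ℕ) (b c : ℝ) (x : ℕ → Fin d → ℝ) (y : ℕ → ℝ) (t : ℕ)
    (v : ℕ → Fin d → ℝ) :
    Qfun d b c x y (t + 2) v = Qfun d b c x y (t + 1) v
      + c * ((v (t + 2) - v (t + 1)) ⬝ᵥ (v (t + 2) - v (t + 1)))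
      + (y (t + 2) - v (t + 2) ⬝ᵥ x (t + 2)) ^ 2 := by
  unfold Qfun
  rw [show t + 2 - 1 = t + 1 from rfl, show t + 1 - 1 = t from rfl,
    Finset.sum_range_succ _ (t + 1), Finset.sum_range_succ _ t]
  ring

lemma laser_Q_congr (d : ℕ) (b c : ℝ) (x : ℕ → Fin d → ℝ) (y : ℕ → ℝ) (t : ℕ)
    (v : ℕ → Fin d → ℝ) (u : Fin d → ℝ) :
    Qfun d b c x y (t + 1) (Function.update v (t + 2) u) = Qfun d b c x y (t + 1) v := by
  have h : ∀ s, s ≤ t + 1 → Function.update v (t + 2) u s = v s := fun s hs =>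
    Function.update_of_ne (by omega) _ _
  unfold Qfun
  rw [show t + 1 - 1 = t from rfl, h 1 (by omega)]
  congr 1
  · congr 2
    refine Finset.sum_congr rfl fun s hs => ?_
    have := Finset.mem_range.1 hs
    rw [h (s + 2) (by omega), h (s + 1) (by omega)]
  · refine Finset.sum_congr rfl fun s hs => ?_
    have := Finset.mem_range.1 hs
    rw [h (s + 1) (by omega)]

lemma laser_vv {d : ℕ} (x u : Fin d → ℝ) :
    u ⬝ᵥ (vecMulVec x x *ᵥ u) = (u ⬝ᵥ x) ^ 2 := by
  rw [Matrix.vecMulVec_mulVec, dotProduct_comm x u]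
  simp [sq]

lemma laser_vv_psd {d : ℕ} (x : Fin d → ℝ) : (vecMulVec x x).PosSemidef := by
  simpa using Matrix.posSemidef_vecMulVec_self_star x

lemma laser_main (d : ℕ) (b c : ℝ) (hb : 0 < b) (hc : 0 < c)
    (x : ℕ → Fin d → ℝ) (y : ℕ → ℝ) (t : ℕ) :
    (Dmat d b c x (t + 1)).PosDef ∧
    (∀ v : ℕ → Fin d → ℝ,
      v (t + 1) ⬝ᵥ (Dmat d b c x (t + 1) *ᵥ v (t + 1)) - 2 * (v (t + 1) ⬝ᵥ evec d b c x y (t + 1))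
        + fsc d b c x y (t + 1) ≤ Qfun d b c x y (t + 1) v) ∧
    (∀ u : Fin d → ℝ, ∃ v : ℕ → Fin d → ℝ, v (t + 1) = u ∧
      Qfun d b c x y (t + 1) v =
      u ⬝ᵥ (Dmat d b c x (t + 1) *ᵥ u) - 2 * (u ⬝ᵥ evec d b c x y (t + 1))
        + fsc d b c x y (t + 1)) := by
  induction t with
  | zero =>
    have key : ∀ v : ℕ → Fin d → ℝ, Qfun d b c x y (0 + 1) v =
        v 1 ⬝ᵥ (Dmat d b c x (0 + 1) *ᵥ v 1) - 2 * (v 1 ⬝ᵥ evec d b c x y (0 + 1))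
        + fsc d b c x y (0 + 1) := by
      intro v
      simp only [zero_add, Qfun, Dmat, evec, fsc, Matrix.add_mulVec, Matrix.smul_mulVec,
        Matrix.one_mulVec, dotProduct_add, dotProduct_smul, smul_eq_mul, laser_vv]
      simp
      ring
    refine ⟨?_, fun v => (key v).ge, fun u => ⟨fun _ => u, rfl, key _⟩⟩
    simp only [Dmat]
    exact (Matrix.PosDef.one.smul hb).add_posSemidef (laser_vv_psd _)
  | succ t ih =>
    obtain ⟨hD, hle, hex⟩ := ih
    have hstep : ∀ u : Fin d → ℝ,
        u ⬝ᵥ (Dmat d b c x (t + 2) *ᵥ u) - 2 * (u ⬝ᵥ evec d b c x y (t + 2))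
          + fsc d b c x y (t + 2) =
        (u ⬝ᵥ (((Dmat d b c x (t + 1))⁻¹ + c⁻¹ • 1)⁻¹ *ᵥ u)
          - 2 * (u ⬝ᵥ ((1 + c⁻¹ • Dmat d b c x (t + 1))⁻¹ *ᵥ evec d b c x y (t + 1)))
          + (fsc d b c x y (t + 1) - evec d b c x y (t + 1) ⬝ᵥ
            ((c • (1 : Matrix (Fin d) (Fin d) ℝ) + Dmat d b c x (t + 1))⁻¹ *ᵥ
              evec d b c x y (t + 1))))
        + (y (t + 2) - u ⬝ᵥ x (t + 2)) ^ 2 := by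
      intro u
      rw [Dmat, evec, fsc, Matrix.add_mulVec, dotProduct_add, laser_vv, dotProduct_add,
        dotProduct_smul, smul_eq_mul]
      ring
    refine ⟨?_, fun v => ?_, fun u => ?_⟩
    · rw [show t + 1 + 1 = t + 2 from rfl, Dmat]
      exact (hD.inv.add (Matrix.PosDef.one.smul (inv_pos.2 hc))).inv.add_posSemidef
        (laser_vv_psd _)
    · rw [show t + 1 + 1 = t + 2 from rfl, hstep, laser_Q_succ]
      have h1 := laser_square hc hD (evec d b c x y (t + 1)) (v (t + 2)) (v (t + 1)) _
        (fsc d b c x y (t + 1)) rfl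
      have h2 := (laser_A hc hD).posSemidef.dotProduct_mulVec_nonneg
        (v (t + 1) - (c • (1 : Matrix (Fin d) (Fin d) ℝ) + Dmat d b c x (t + 1))⁻¹ *ᵥ
          (evec d b c x y (t + 1) + c • v (t + 2)))
      rw [star_trivial] at h2
      have h3 := hle v
      linarith
    · obtain ⟨v, hv, hQ⟩ := hex ((c • (1 : Matrix (Fin d) (Fin d) ℝ) + Dmat d b c x (t + 1))⁻¹ *ᵥ
          (evec d b c x y (t + 1) + c • u))
      refine ⟨Function.update v (t + 2) u, Function.update_self _ _ _, ?_⟩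
      rw [show t + 1 + 1 = t + 2 from rfl, hstep, laser_Q_succ, laser_Q_congr,
        Function.update_self, Function.update_of_ne (by omega), hQ, ← hv]
      have h1 := laser_square hc hD (evec d b c x y (t + 1)) u (v (t + 1)) (v (t + 1))
        (fsc d b c x y (t + 1)) hv
      rw [h1, sub_self, zero_dotProduct, zero_add]

theorem laser_P_quadratic_form (d : ℕ) (hd : 1 ≤ d) (b c : ℝ) (hb : 0 < b) (hbc : b < c)
    (x : ℕ → Fin d → ℝ) (y : ℕ → ℝ) :
    ∀ t : ℕ, 1 ≤ t →
      (Dmat d b c x t).PosDef ∧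
      ∀ u : Fin d → ℝ,
        Pfun d b c x y t u =
          u ⬝ᵥ (Dmat d b c x t *ᵥ u) - 2 * (u ⬝ᵥ evec d b c x y t)
            + fsc d b c x y t := by
  intro t ht
  obtain ⟨t, rfl⟩ : ∃ s, t = s + 1 := ⟨t - 1, by omega⟩
  obtain ⟨hD, hle, hex⟩ := laser_main d b c hb (hb.trans hbc) x y t
  refine ⟨hD, fun u => ?_⟩
  have hle' : ∀ v : ℕ → Fin d → ℝ, u ⬝ᵥ (Dmat d b c x (t + 1) *ᵥ u)
      - 2 * (u ⬝ᵥ evec d b c x y (t + 1)) + fsc d b c x y (t + 1)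
      ≤ Qfun d b c x y (t + 1) (Function.update v (t + 1) u) := by
    intro v
    have := hle (Function.update v (t + 1) u)
    rwa [Function.update_self] at this
  obtain ⟨v, hv, hQ⟩ := hex u
  unfold Pfun
  apply le_antisymm
  · refine (ciInf_le ⟨?_, ?_⟩ v).trans ?_
    · exact u ⬝ᵥ (Dmat d b c x (t + 1) *ᵥ u)
        - 2 * (u ⬝ᵥ evec d b c x y (t + 1)) + fsc d b c x y (t + 1)
    · rintro _ ⟨w, rfl⟩
      exact hle' w
    · rw [← hQ]
      subst hv
      rw [Function.update_eq_self]
  · exact le_ciInf hle'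
end

section
/- For every t ≥ 1, the infimum over u_1, …, u_t ∈ ℝ^d of Q_t(u_1, …, u_t) equals −e_tᵀ D_t^{-1} e_t + f_t. -/
open Matrix Finset

lemma aux_square {d : ℕ} (M : Matrix (Fin d) (Fin d) ℝ) (hM : M.PosDef) (g w : Fin d → ℝ) :
    w ⬝ᵥ (M *ᵥ w) - 2 * (w ⬝ᵥ g)
      = (w - M⁻¹ *ᵥ g) ⬝ᵥ (M *ᵥ (w - M⁻¹ *ᵥ g)) - g ⬝ᵥ (M⁻¹ *ᵥ g) := by
  have hdet : IsUnit M.det := (Matrix.isUnit_iff_isUnit_det _).1 hM.isUnit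
  have hT : Mᵀ = M := by simpa using hM.1.eq
  have h1 : M *ᵥ (M⁻¹ *ᵥ g) = g := by
    rw [mulVec_mulVec, mul_nonsing_inv _ hdet, one_mulVec]
  have h2 : (M⁻¹ *ᵥ g) ⬝ᵥ (M *ᵥ w) = w ⬝ᵥ g := by
    rw [dotProduct_mulVec, ← mulVec_transpose, hT, h1, dotProduct_comm]
  rw [mulVec_sub, h1, sub_dotProduct, dotProduct_sub, dotProduct_sub, h2,
    dotProduct_comm (M⁻¹ *ᵥ g) g]
  ring

lemma aux_nonneg {d : ℕ} (M : Matrix (Fin d) (Fin d) ℝ) (hM : M.PosDef) (w : Fin d → ℝ) :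
    0 ≤ w ⬝ᵥ (M *ᵥ w) := by
  simpa using hM.posSemidef.dotProduct_mulVec_nonneg w

lemma aux_vv {d : ℕ} (a : Fin d → ℝ) : (vecMulVec a a).PosSemidef := by
  simpa using posSemidef_vecMulVec_self_star a

lemma Dmat_posDef (d : ℕ) (b c : ℝ) (hb : 0 < b) (hc : 0 < c) (x : ℕ → Fin d → ℝ) (t : ℕ) :
    (Dmat d b c x (t + 1)).PosDef := by
  induction t with
  | zero =>
    rw [Dmat]
    exact (PosDef.one.smul hb).add_posSemidef (aux_vv _)
  | succ t ih =>
    rw [Dmat]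
    exact (ih.inv.add (PosDef.one.smul (inv_pos.2 hc))).inv.add_posSemidef (aux_vv _)

lemma aux_inv1 {d : ℕ} (c : ℝ) (hc : 0 < c) (D : Matrix (Fin d) (Fin d) ℝ) (hD : D.PosDef) :
    (D⁻¹ + c⁻¹ • 1)⁻¹ = c • (1 : Matrix (Fin d) (Fin d) ℝ) - (c ^ 2) • (c • 1 + D)⁻¹ := by
  have hM : (c • (1 : Matrix (Fin d) (Fin d) ℝ) + D).PosDef := (PosDef.one.smul hc).add hD
  have hdet := (Matrix.isUnit_iff_isUnit_det _).1 hM.isUnit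
  have hdet' := (Matrix.isUnit_iff_isUnit_det _).1 hD.isUnit
  apply inv_eq_right_inv
  have h1 := mul_nonsing_inv _ hdet
  set N := (c • (1 : Matrix (Fin d) (Fin d) ℝ) + D)⁻¹
  have h2 : D * N = 1 - c • N := by
    rw [add_mul, smul_mul_assoc, one_mul] at h1
    rw [← h1]; abel
  have h3 : N = D⁻¹ - c • (D⁻¹ * N) := by
    calc N = D⁻¹ * (D * N) := by rw [← mul_assoc, nonsing_inv_mul _ hdet', one_mul]
      _ = _ := by rw [h2, mul_sub, mul_one, mul_smul_comm]
  have h4 : c • (D⁻¹ * N) = D⁻¹ - N := by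
    rw [eq_sub_iff_add_eq, add_comm]
    nth_rewrite 1 [h3]
    abel
  have h5 : (c ^ 2) • (D⁻¹ * N) = c • D⁻¹ - c • N := by
    rw [pow_two, mul_smul, h4, smul_sub]
  rw [add_mul, mul_sub, mul_smul_comm, mul_smul_comm, mul_one, h5, smul_mul_assoc, one_mul,
    smul_sub, smul_smul, smul_smul, inv_mul_cancel₀ hc.ne', one_smul]
  have : c⁻¹ * c ^ 2 = c := by field_simp
  rw [this]
  abel

lemma aux_inv2 {d : ℕ} (c : ℝ) (hc : 0 < c) (D : Matrix (Fin d) (Fin d) ℝ) (hD : D.PosDef) :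
    (1 + c⁻¹ • D)⁻¹ = c • (c • (1 : Matrix (Fin d) (Fin d) ℝ) + D)⁻¹ := by
  have hM : (c • (1 : Matrix (Fin d) (Fin d) ℝ) + D).PosDef := (PosDef.one.smul hc).add hD
  have hdet := (Matrix.isUnit_iff_isUnit_det _).1 hM.isUnit
  apply inv_eq_right_inv
  have h : (1 + c⁻¹ • D) = c⁻¹ • (c • (1 : Matrix (Fin d) (Fin d) ℝ) + D) := by
    rw [smul_add, smul_smul, inv_mul_cancel₀ hc.ne', one_smul]
  rw [h, smul_mul_assoc, mul_smul_comm, mul_nonsing_inv _ hdet, smul_smul,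
    inv_mul_cancel₀ hc.ne', one_smul]

/-- value function -/
noncomputable def Vfun (d : ℕ) (b c : ℝ) (x : ℕ → Fin d → ℝ) (y : ℕ → ℝ)
    (t : ℕ) (u : Fin d → ℝ) : ℝ :=
  u ⬝ᵥ (Dmat d b c x t *ᵥ u) - 2 * (u ⬝ᵥ evec d b c x y t) + fsc d b c x y t

lemma aux_vvq {d : ℕ} (a u : Fin d → ℝ) : u ⬝ᵥ (vecMulVec a a *ᵥ u) = (u ⬝ᵥ a) ^ 2 := by
  rw [vecMulVec_mulVec]
  simp [dotProduct_comm a u, pow_two]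

lemma Vfun_step (d : ℕ) (b c : ℝ) (hb : 0 < b) (hc : 0 < c) (x : ℕ → Fin d → ℝ) (y : ℕ → ℝ)
    (t : ℕ) (u w : Fin d → ℝ) :
    Vfun d b c x y (t + 1) w + c * ((u - w) ⬝ᵥ (u - w)) + (y (t + 2) - u ⬝ᵥ x (t + 2)) ^ 2
      = Vfun d b c x y (t + 2) u
        + (w - (c • 1 + Dmat d b c x (t + 1))⁻¹ *ᵥ (evec d b c x y (t + 1) + c • u)) ⬝ᵥ
          ((c • 1 + Dmat d b c x (t + 1)) *ᵥ
          (w - (c • 1 + Dmat d b c x (t + 1))⁻¹ *ᵥ (evec d b c x y (t + 1) + c • u))) := by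
  have hD := Dmat_posDef d b c hb hc x t
  unfold Vfun
  rw [Dmat, evec, fsc, aux_inv1 c hc _ hD, aux_inv2 c hc _ hD]
  generalize Dmat d b c x (t + 1) = D at *
  generalize evec d b c x y (t + 1) = e at *
  have hM : (c • (1 : Matrix (Fin d) (Fin d) ℝ) + D).PosDef := (PosDef.one.smul hc).add hD
  have key := aux_square _ hM (e + c • u) w
  have hsym : e ⬝ᵥ ((c • 1 + D)⁻¹ *ᵥ u) = u ⬝ᵥ ((c • 1 + D)⁻¹ *ᵥ e) := by
    have hT : ((c • 1 + D)⁻¹)ᵀ = (c • (1 : Matrix (Fin d) (Fin d) ℝ) + D)⁻¹ := by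
      simpa using hM.inv.1.eq
    rw [dotProduct_mulVec, ← mulVec_transpose, hT, dotProduct_comm]
  rw [eq_sub_iff_add_eq] at key
  rw [← key]
  generalize (c • (1 : Matrix (Fin d) (Fin d) ℝ) + D)⁻¹ = N at *
  simp only [add_mulVec, sub_mulVec, smul_mulVec, one_mulVec, mulVec_add, mulVec_smul,
    dotProduct_add, add_dotProduct, dotProduct_sub, sub_dotProduct, dotProduct_smul,
    smul_dotProduct, smul_eq_mul, aux_vvq, hsym, dotProduct_comm w u]
  ring

lemma Qfun_succ (d : ℕ) (b c : ℝ) (x : ℕ → Fin d → ℝ) (y : ℕ → ℝ) (t : ℕ)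
    (u : ℕ → Fin d → ℝ) :
    Qfun d b c x y (t + 2) u = Qfun d b c x y (t + 1) u
      + c * ((u (t + 2) - u (t + 1)) ⬝ᵥ (u (t + 2) - u (t + 1)))
      + (y (t + 2) - u (t + 2) ⬝ᵥ x (t + 2)) ^ 2 := by
  unfold Qfun
  rw [show t + 2 - 1 = t + 1 from rfl, show t + 1 - 1 = t from rfl,
    Finset.sum_range_succ _ t, Finset.sum_range_succ _ (t + 1)]
  ring

lemma Qfun_congr (d : ℕ) (b c : ℝ) (x : ℕ → Fin d → ℝ) (y : ℕ → ℝ) (t : ℕ)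
    (u v : ℕ → Fin d → ℝ) (h : ∀ s ≤ t + 1, u s = v s) :
    Qfun d b c x y (t + 1) u = Qfun d b c x y (t + 1) v := by
  induction t with
  | zero => simp [Qfun, h 1 le_rfl]
  | succ t ih =>
    rw [Qfun_succ, Qfun_succ, ih (fun s hs => h s (by omega)), h (t + 2) (by omega),
      h (t + 1) (by omega)]

lemma Q_one (d : ℕ) (b c : ℝ) (x : ℕ → Fin d → ℝ) (y : ℕ → ℝ) (v : ℕ → Fin d → ℝ) :
    Qfun d b c x y 1 v = Vfun d b c x y 1 (v 1) := by
  simp only [Qfun, Vfun, Dmat, evec, fsc, add_mulVec, dotProduct_add, aux_vvq, smul_mulVec,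
    one_mulVec, dotProduct_smul, smul_eq_mul]
  simp
  ring

lemma Q_ge (d : ℕ) (b c : ℝ) (hb : 0 < b) (hc : 0 < c) (x : ℕ → Fin d → ℝ) (y : ℕ → ℝ)
    (t : ℕ) (v : ℕ → Fin d → ℝ) :
    Vfun d b c x y (t + 1) (v (t + 1)) ≤ Qfun d b c x y (t + 1) v := by
  induction t with
  | zero => exact (Q_one d b c x y v).ge
  | succ t ih =>
    have h := Vfun_step d b c hb hc x y t (v (t + 2)) (v (t + 1))
    have hn := aux_nonneg _ ((PosDef.one.smul hc).add (Dmat_posDef d b c hb hc x t))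
      (v (t + 1) - (c • 1 + Dmat d b c x (t + 1))⁻¹ *ᵥ
        (evec d b c x y (t + 1) + c • v (t + 2)))
    rw [Qfun_succ]
    show Vfun d b c x y (t + 2) (v (t + 2)) ≤ _
    linarith

lemma Q_attain (d : ℕ) (b c : ℝ) (hb : 0 < b) (hc : 0 < c) (x : ℕ → Fin d → ℝ) (y : ℕ → ℝ)
    (t : ℕ) (w : Fin d → ℝ) :
    ∃ v : ℕ → Fin d → ℝ, v (t + 1) = w ∧
      Qfun d b c x y (t + 1) v = Vfun d b c x y (t + 1) w := by
  induction t generalizing w with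
  | zero => exact ⟨fun _ => w, rfl, Q_one d b c x y _⟩
  | succ t ih =>
    obtain ⟨v, hv, hQ⟩ := ih ((c • 1 + Dmat d b c x (t + 1))⁻¹ *ᵥ
        (evec d b c x y (t + 1) + c • w))
    have h := Vfun_step d b c hb hc x y t w (v (t + 1))
    refine ⟨Function.update v (t + 2) w, Function.update_self .., ?_⟩
    rw [Qfun_succ, Qfun_congr d b c x y t _ v, hQ, ← hv, Function.update_self,
      Function.update_of_ne (by omega), h, hv]
    · simp
    · intro s hs
      exact Function.update_of_ne (by omega) ..

theorem laser_inf_Q (d : ℕ) (hd : 1 ≤ d) (b c : ℝ) (hb : 0 < b) (hbc : b < c)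
    (x : ℕ → Fin d → ℝ) (y : ℕ → ℝ) :
    ∀ t : ℕ, 1 ≤ t →
      (⨅ u : ℕ → Fin d → ℝ, Qfun d b c x y t u) =
        -(evec d b c x y t ⬝ᵥ ((Dmat d b c x t)⁻¹ *ᵥ evec d b c x y t))
          + fsc d b c x y t := by
  intro t ht
  obtain ⟨t, rfl⟩ : ∃ k, t = k + 1 := ⟨t - 1, by omega⟩
  have hc : 0 < c := hb.trans hbc
  have hD := Dmat_posDef d b c hb hc x t
  have hsq := aux_square _ hD (evec d b c x y (t + 1))
  apply le_antisymm
  · obtain ⟨v, hv, hQ⟩ := Q_attain d b c hb hc x y t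
      ((Dmat d b c x (t + 1))⁻¹ *ᵥ evec d b c x y (t + 1))
    have hbdd : BddBelow (Set.range fun u => Qfun d b c x y (t + 1) u) := by
      refine ⟨-(evec d b c x y (t + 1) ⬝ᵥ ((Dmat d b c x (t + 1))⁻¹ *ᵥ evec d b c x y (t + 1)))
          + fsc d b c x y (t + 1), ?_⟩
      rintro _ ⟨u, rfl⟩
      refine le_trans ?_ (Q_ge d b c hb hc x y t u)
      rw [Vfun, hsq]
      have := aux_nonneg _ hD (u (t + 1) - (Dmat d b c x (t + 1))⁻¹ *ᵥ evec d b c x y (t + 1))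
      linarith
    refine (ciInf_le hbdd v).trans ?_
    rw [hQ, Vfun, hsq]
    simp
  · refine le_ciInf fun u => ?_
    refine le_trans ?_ (Q_ge d b c hb hc x y t u)
    rw [Vfun, hsq]
    have := aux_nonneg _ hD (u (t + 1) - (Dmat d b c x (t + 1))⁻¹ *ᵥ evec d b c x y (t + 1))
    linarith
end

section
/- Let A be a d×d real symmetric positive definite matrix, c > 0, and x ∈ ℝ^d. Set D = (A^{-1} + c^{-1}·I)^{-1} + x xᵀ and A' = (I + c^{-1}·A)^{-1}. Then the matrix A' D^{-1} x xᵀ D^{-1} A' − A^{-1} + A'(D^{-1} A' + c^{-1}·I) is negative semidefinite. -/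
open Matrix

theorem laser_technical_negsemidef (d : ℕ) (hd : 1 ≤ d)
    (A : Matrix (Fin d) (Fin d) ℝ) (hA : A.PosDef)
    (c : ℝ) (hc : 0 < c) (x : Fin d → ℝ)
    (D : Matrix (Fin d) (Fin d) ℝ)
    (hD : D = (A⁻¹ + c⁻¹ • 1)⁻¹ + vecMulVec x x)
    (A' : Matrix (Fin d) (Fin d) ℝ)
    (hA' : A' = (1 + c⁻¹ • A)⁻¹) :
    ∀ v : Fin d → ℝ,
      v ⬝ᵥ ((A' * D⁻¹ * vecMulVec x x * D⁻¹ * A' - A⁻¹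
        + A' * (D⁻¹ * A' + c⁻¹ • 1)) *ᵥ v) ≤ 0 := by
  have hc' : 0 < c⁻¹ := inv_pos.mpr hc
  have hP : (A⁻¹ + c⁻¹ • (1 : Matrix (Fin d) (Fin d) ℝ)).PosDef :=
    hA.inv.add (PosDef.one.smul hc')
  have hQ : ((1 : Matrix (Fin d) (Fin d) ℝ) + c⁻¹ • A).PosDef := PosDef.one.add (hA.smul hc')
  have hX : (vecMulVec x x).PosSemidef := by
    simpa using posSemidef_vecMulVec_self_star x
  have hDp : D.PosDef := by rw [hD]; exact hP.inv.add_posSemidef hX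
  have hA1 : A⁻¹ * A = 1 := nonsing_inv_mul _ ((isUnit_iff_isUnit_det _).1 hA.isUnit)
  have hD1 : D⁻¹ * D = 1 := nonsing_inv_mul _ ((isUnit_iff_isUnit_det _).1 hDp.isUnit)
  have hD2 : D * D⁻¹ = 1 := mul_nonsing_inv _ ((isUnit_iff_isUnit_det _).1 hDp.isUnit)
  have hQ1 : A' * (1 + c⁻¹ • A) = 1 := by
    rw [hA']; exact nonsing_inv_mul _ ((isUnit_iff_isUnit_det _).1 hQ.isUnit)
  have hQ2 : (1 + c⁻¹ • A) * A' = 1 := by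
    rw [hA']; exact mul_nonsing_inv _ ((isUnit_iff_isUnit_det _).1 hQ.isUnit)
  have hA's : A'ᵀ = A' := by
    have := hQ.inv.isHermitian
    rw [← hA'] at this
    simpa [IsHermitian] using this
  have hDs : D⁻¹ᵀ = D⁻¹ := by simpa [IsHermitian] using hDp.inv.isHermitian
  have hXs : (vecMulVec x x)ᵀ = vecMulVec x x := by simpa [IsHermitian] using hX.isHermitian
  have hP1 := nonsing_inv_mul _ ((isUnit_iff_isUnit_det _).1 hP.isUnit)
  have hP2 := mul_nonsing_inv _ ((isUnit_iff_isUnit_det _).1 hP.isUnit)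
  have hPA : (A⁻¹ + c⁻¹ • (1 : Matrix (Fin d) (Fin d) ℝ)) * A' = A⁻¹ := by
    have : A⁻¹ + c⁻¹ • (1 : Matrix (Fin d) (Fin d) ℝ) = A⁻¹ * (1 + c⁻¹ • A) := by
      rw [mul_add, mul_smul_comm, hA1, mul_one]
    rw [this, mul_assoc, hQ2, mul_one]
  have hAA : A⁻¹ = A' * A⁻¹ + c⁻¹ • A' := by
    have h : (1 + c⁻¹ • A) * A⁻¹ = A⁻¹ + c⁻¹ • (1 : Matrix (Fin d) (Fin d) ℝ) := by
      rw [add_mul, smul_mul_assoc,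
        mul_nonsing_inv _ ((isUnit_iff_isUnit_det _).1 hA.isUnit), one_mul]
    calc A⁻¹ = A' * ((1 + c⁻¹ • A) * A⁻¹) := by rw [← mul_assoc, hQ1, one_mul]
      _ = _ := by rw [h, mul_add, mul_smul_comm, mul_one]
  generalize hPe : A⁻¹ + c⁻¹ • (1 : Matrix (Fin d) (Fin d) ℝ) = P at *
  generalize hXe : vecMulVec x x = X at *
  have hXD : X * D⁻¹ = 1 - P⁻¹ * D⁻¹ := by
    rw [← hD2]; nth_rw 2 [hD]; noncomm_ring
  have hDX : D⁻¹ * X = 1 - D⁻¹ * P⁻¹ := by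
    rw [← hD1]; nth_rw 3 [hD]; noncomm_ring
  have key : A' * D⁻¹ * X * D⁻¹ * A' - A⁻¹ + A' * (D⁻¹ * A' + c⁻¹ • 1)
      = -((X * D⁻¹ * A')ᵀ * P * (X * D⁻¹ * A')) := by
    have e1 : (X * D⁻¹ * A')ᵀ = A' * (D⁻¹ * X) := by
      rw [transpose_mul, transpose_mul, hA's, hDs, hXs]
    have e2 : (D⁻¹ * X) * P * (X * D⁻¹) = P - D⁻¹ - D⁻¹ + D⁻¹ * P⁻¹ * D⁻¹ := by
      rw [hDX, hXD]
      have a1 : (1 - D⁻¹ * P⁻¹) * P = P - D⁻¹ := by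
        rw [sub_mul, one_mul, mul_assoc, hP1, mul_one]
      rw [a1, mul_sub, mul_one, ← mul_assoc, sub_mul, hP2, sub_mul, one_mul]
      abel
    have e3 : D⁻¹ * X * D⁻¹ = D⁻¹ - D⁻¹ * P⁻¹ * D⁻¹ := by
      rw [hDX, sub_mul, one_mul]
    have e4 : A' * P * A' = A⁻¹ - c⁻¹ • A' := by
      rw [mul_assoc, hPA]; exact eq_sub_of_add_eq hAA.symm
    calc _ = A' * (D⁻¹ * X * D⁻¹) * A' - (A⁻¹ - c⁻¹ • A') + A' * D⁻¹ * A' := by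
          rw [mul_add, mul_smul_comm, mul_one]; simp only [mul_assoc]; abel
      _ = -(A' * ((D⁻¹ * X) * P * (X * D⁻¹)) * A') := by
          rw [← e4, e3, e2]; noncomm_ring
      _ = _ := by rw [e1]; simp only [mul_assoc]
  intro v
  rw [key, neg_mulVec, dotProduct_neg, neg_nonpos, ← mulVec_mulVec, ← mulVec_mulVec,
    dotProduct_mulVec, vecMul_transpose]
  simpa using hP.posSemidef.dotProduct_mulVec_nonneg ((X * D⁻¹ * A') *ᵥ v)
end

section
/- Let M be a d×d real symmetric positive definite matrix and x ∈ ℝ^d, and set D = M + x xᵀ. Then xᵀ D^{-1} x ≤ ln(det D / det M). -/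
open Matrix

theorem quadratic_form_le_log_det_ratio (d : ℕ) (hd : 1 ≤ d)
    (M : Matrix (Fin d) (Fin d) ℝ) (hM : M.PosDef) (x : Fin d → ℝ)
    (D : Matrix (Fin d) (Fin d) ℝ) (hD : D = M + vecMulVec x x) :
    x ⬝ᵥ (D⁻¹ *ᵥ x) ≤ Real.log (D.det / M.det) := by
  have hpsd : (vecMulVec x x).PosSemidef := by
    simpa using posSemidef_vecMulVec_self_star x
  have hDp : D.PosDef := hD ▸ hM.add_posSemidef hpsd
  have h1 := hDp.det_pos
  have h2 := hM.det_pos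
  have hMD : M = D + replicateCol Unit (-x) * replicateRow Unit x := by
    rw [← vecMulVec_eq, hD]
    ext i j
    simp [vecMulVec_apply]
  have key := det_add_replicateCol_mul_replicateRow (ι := Unit) h1.ne'.isUnit (-x) x
  rw [← hMD] at key
  have hq : (1 + replicateRow Unit x * D⁻¹ * replicateCol Unit (-x)).det
      = 1 - x ⬝ᵥ (D⁻¹ *ᵥ x) := by
    rw [det_unique, Matrix.mul_assoc, ← replicateCol_mulVec]
    simp [Matrix.mul_apply, dotProduct, mulVec_neg, sub_eq_add_neg]
  rw [hq] at key
  have h3 := Real.one_sub_inv_le_log_of_pos (div_pos h1 h2)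
  have h4 : (D.det / M.det)⁻¹ = 1 - x ⬝ᵥ (D⁻¹ *ᵥ x) := by
    rw [inv_div, key]
    field_simp
  linarith
end

section
/- Let β > 0, λ ≥ 0, and let γ, x be reals with x² ≤ γ². Define f(λ) = λβ/(λ + β) + x². Then: (1) f(λ) ≤ β + γ²; (2) f(λ) ≤ λ + γ²; (3) f(λ) ≤ max{ λ, (3γ² + √(γ⁴ + 4γ²β))/2 }. -/
theorem scalar_operator_lemma (β lam γ x : ℝ) (hβ : 0 < β) (hlam : 0 ≤ lam)
    (hx : x ^ 2 ≤ γ ^ 2) :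
    lam * β / (lam + β) + x ^ 2 ≤ β + γ ^ 2 ∧
    lam * β / (lam + β) + x ^ 2 ≤ lam + γ ^ 2 ∧
    lam * β / (lam + β) + x ^ 2 ≤
      max lam ((3 * γ ^ 2 + Real.sqrt (γ ^ 4 + 4 * γ ^ 2 * β)) / 2) := by
  have hp : 0 < lam + β := by linarith
  have h1 : lam * β / (lam + β) ≤ β := by
    rw [div_le_iff₀ hp]; nlinarith [sq_nonneg β]
  have h2 : lam * β / (lam + β) ≤ lam := by
    rw [div_le_iff₀ hp]; nlinarith [sq_nonneg lam]
  refine ⟨by linarith, by linarith, ?_⟩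
  have hs0 := Real.sqrt_nonneg (γ ^ 4 + 4 * γ ^ 2 * β)
  have hs : Real.sqrt (γ ^ 4 + 4 * γ ^ 2 * β) ^ 2 = γ ^ 4 + 4 * γ ^ 2 * β :=
    Real.sq_sqrt (by positivity)
  set s := Real.sqrt (γ ^ 4 + 4 * γ ^ 2 * β)
  rcases le_total ((γ ^ 2 + s) / 2) lam with h | h
  · apply le_max_of_le_left
    have h3 : s ^ 2 ≤ (2 * lam - γ ^ 2) ^ 2 :=
      pow_le_pow_left₀ hs0 (by linarith) 2
    have h4 : lam * β / (lam + β) ≤ lam - γ ^ 2 := by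
      rw [div_le_iff₀ hp]; nlinarith
    linarith
  · apply le_max_of_le_right
    linarith
end

section
/- Let X > 0 and b > 0, and set μ = max{ (9/8)·X², (b + X²)²/(8X²) } and M = max{ 3X², b + X² }. Then M = √(8X²·μ), and for every c with 0 < c ≤ μ, max{ (3X² + √(X⁴ + 4X²c))/2, b + X² } ≤ M. -/
theorem laser_M_mu_relation (X b : ℝ) (hX : 0 < X) (hb : 0 < b)
    (μ M : ℝ)
    (hμ : μ = max ((9 / 8) * X ^ 2) ((b + X ^ 2) ^ 2 / (8 * X ^ 2)))
    (hM : M = max (3 * X ^ 2) (b + X ^ 2)) :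
    M = Real.sqrt (8 * X ^ 2 * μ) ∧
    ∀ c : ℝ, 0 < c → c ≤ μ →
      max ((3 * X ^ 2 + Real.sqrt (X ^ 4 + 4 * X ^ 2 * c)) / 2) (b + X ^ 2) ≤ M := by
  have ht : 0 < X ^ 2 := by positivity
  have h1 : 3 * X ^ 2 ≤ M := hM ▸ le_max_left _ _
  have h2 : b + X ^ 2 ≤ M := hM ▸ le_max_right _ _
  have key : 8 * X ^ 2 * μ = M ^ 2 := by
    have e : 8 * X ^ 2 * ((b + X ^ 2) ^ 2 / (8 * X ^ 2)) = (b + X ^ 2) ^ 2 := by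
      field_simp
    rw [hμ, mul_max_of_nonneg _ _ (by positivity), e]
    rcases le_total (3 * X ^ 2) (b + X ^ 2) with h | h
    · rw [hM, max_eq_right h, max_eq_right]
      nlinarith
    · rw [hM, max_eq_left h, max_eq_left]
      · ring
      · nlinarith
  have hM0 : 0 < M := by linarith
  refine ⟨?_, fun c _ hc => max_le ?_ h2⟩
  · rw [key, Real.sqrt_sq hM0.le]
  · have : Real.sqrt (X ^ 4 + 4 * X ^ 2 * c) ≤ 2 * M - 3 * X ^ 2 := by
      apply Real.sqrt_le_iff.mpr
      refine ⟨by linarith, ?_⟩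
      have hc' := mul_le_mul_of_nonneg_left hc ht.le
      nlinarith [sq_nonneg (M - 3 * X ^ 2), mul_nonneg (sub_nonneg.mpr h1) ht.le, mul_pos ht ht]
    linarith
end

section
/- Let p ∈ ℝ and Y > 0. The function g(ŷ) = ŷ² + 2Y·|p − ŷ| attains its minimum over ℝ at ŷ* = clip(p, Y) = sign(p)·min{|p|, Y}, i.e., g(clip(p, Y)) ≤ g(ŷ) for all ŷ ∈ ℝ. -/
theorem clip_minimizes (p Y : ℝ) (hY : 0 < Y) :
    ∀ yhat : ℝ,
      (Real.sign p * min |p| Y) ^ 2 + 2 * Y * |p - Real.sign p * min |p| Y| ≤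
        yhat ^ 2 + 2 * Y * |p - yhat| := by
  intro y
  have a1 := mul_le_mul_of_nonneg_left (le_abs_self (p - y)) hY.le
  have a2 := mul_le_mul_of_nonneg_left (neg_le_abs (p - y)) hY.le
  rcases le_total |p| Y with h | h
  · have hc : Real.sign p * |p| = p := by
      rcases lt_trichotomy p 0 with h0 | h0 | h0
      · rw [Real.sign_of_neg h0, abs_of_neg h0]; ring
      · simp [h0]
      · rw [Real.sign_of_pos h0, abs_of_pos h0]; ring
    rw [min_eq_left h, hc, sub_self, abs_zero]
    have h1 : p * (p - y) ≤ |p| * |p - y| := by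
      rw [← abs_mul]; exact le_abs_self _
    have h2 := mul_le_mul_of_nonneg_right h (abs_nonneg (p - y))
    nlinarith [sq_nonneg (p - y)]
  · rw [min_eq_right h]
    rcases lt_trichotomy p 0 with h0 | h0 | h0
    · rw [abs_of_neg h0] at h
      rw [Real.sign_of_neg h0, abs_of_nonpos (by linarith : p - -1 * Y ≤ 0)]
      nlinarith [sq_nonneg (y + Y)]
    · simp [h0] at h; linarith
    · rw [abs_of_pos h0] at h
      rw [Real.sign_of_pos h0, abs_of_nonneg (by linarith : 0 ≤ p - 1 * Y)]
      nlinarith [sq_nonneg (y - Y)]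
end
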